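/- Fix real k₁ > 0 and k₂ > 0, and set ρ = k₁ + 2k₂. For λ ≥ 0 and t ≥ 0 define I(λ, t) = ∫₀¹ ∫₀^π (cosh²t + 2 r cos φ sinh t cosh t + r² sinh²t)^((λ−ρ)/2) (1−r²)^(k₁−1) r^(2k₂) (sin φ)^(2k₂−1) dφ dr. Then for all λ ≥ 0 and t ≥ 0 with λ t ≤ 1, one has e^(−1) I(0, t) ≤ I(λ, t) ≤ e · I(0, t). -/

import Mathlib

open MeasureTheory Real

/-- Koornwinder's integral representation (up to a constant) of the
Heckman–Opdam hypergeometric function for the root system `BC₁`. -/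
noncomputable def bcIntegral (k₁ k₂ l t : ℝ) : ℝ :=
  ∫ r in (0:ℝ)..1, ∫ φ in (0:ℝ)..Real.pi,
    (Real.cosh t ^ 2 + 2 * r * Real.cos φ * Real.sinh t * Real.cosh t +
        r ^ 2 * Real.sinh t ^ 2) ^ ((l - (k₁ + 2 * k₂)) / 2) *
      (1 - r ^ 2) ^ (k₁ - 1) * r ^ (2 * k₂) * Real.sin φ ^ (2 * k₂ - 1)

theorem aux_int_le {α : Type*} [MeasurableSpace α] {μ : Measure α} {f g : α → ℝ} {C : ℝ}
    (hg : AEStronglyMeasurable g μ)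
    (hf0 : 0 ≤ᵐ[μ] f) (hg0 : 0 ≤ᵐ[μ] g)
    (h1 : ∀ᵐ x ∂μ, f x ≤ C * g x) (h2 : ∀ᵐ x ∂μ, g x ≤ C * f x) :
    ∫ x, f x ∂μ ≤ C * ∫ x, g x ∂μ := by
  by_cases hi : Integrable g μ
  · rw [← integral_const_mul]
    exact integral_mono_of_nonneg hf0 (hi.const_mul C) h1
  · have hfi : ¬ Integrable f μ := by
      intro hfi
      apply hi
      refine (hfi.const_mul C).mono' hg ?_
      filter_upwards [hg0, h2] with x hx hx2
      rw [Real.norm_eq_abs, abs_of_nonneg hx]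
      exact hx2
    rw [integral_undef hi, integral_undef hfi, mul_zero]

noncomputable def auxF (k₁ k₂ t l : ℝ) (r φ : ℝ) : ℝ :=
    (Real.cosh t ^ 2 + 2 * r * Real.cos φ * Real.sinh t * Real.cosh t +
        r ^ 2 * Real.sinh t ^ 2) ^ ((l - (k₁ + 2 * k₂)) / 2) *
      (1 - r ^ 2) ^ (k₁ - 1) * r ^ (2 * k₂) * Real.sin φ ^ (2 * k₂ - 1)

theorem auxF_meas (k₁ k₂ t l : ℝ) : Measurable (Function.uncurry (auxF k₁ k₂ t l)) := by
  unfold auxF Function.uncurry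
  fun_prop

theorem aux_B (t r c : ℝ) (ht : 0 ≤ t) (hr : 0 ≤ r) (hr1 : r ≤ 1) (hc : -1 ≤ c) (hc1 : c ≤ 1) :
    Real.exp (-t) ^ 2 ≤ Real.cosh t ^ 2 + 2 * r * c * Real.sinh t * Real.cosh t +
        r ^ 2 * Real.sinh t ^ 2 ∧
    Real.cosh t ^ 2 + 2 * r * c * Real.sinh t * Real.cosh t +
        r ^ 2 * Real.sinh t ^ 2 ≤ Real.exp t ^ 2 := by
  have hs : 0 ≤ Real.sinh t := Real.sinh_nonneg_iff.2 ht
  have hlt : Real.sinh t < Real.cosh t := Real.sinh_lt_cosh t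
  rw [← Real.cosh_sub_sinh, ← Real.cosh_add_sinh]
  generalize Real.sinh t = s at *
  generalize Real.cosh t = h at *
  have hp : 0 ≤ r * s * h := mul_nonneg (mul_nonneg hr hs) (by linarith)
  have hrs : r * s ≤ s := by nlinarith
  have hrs0 : 0 ≤ r * s := by positivity
  constructor
  · have e1 : (h - s) ^ 2 ≤ (h - r * s) ^ 2 := by
      apply pow_le_pow_left₀ <;> linarith
    nlinarith [mul_nonneg hp (by linarith : 0 ≤ 1 + c)]
  · have e1 : (h + r * s) ^ 2 ≤ (h + s) ^ 2 := by
      apply pow_le_pow_left₀ <;> linarith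
    nlinarith [mul_nonneg hp (by linarith : 0 ≤ 1 - c)]

theorem auxF_bd (k₁ k₂ t l r φ : ℝ) (ht : 0 ≤ t) (hl : 0 ≤ l) (hlt : l * t ≤ 1)
    (hr : r ∈ Set.Ioc (0:ℝ) 1) (hφ : φ ∈ Set.Ioc (0:ℝ) Real.pi) :
    0 ≤ auxF k₁ k₂ t 0 r φ ∧ 0 ≤ auxF k₁ k₂ t l r φ ∧
    auxF k₁ k₂ t l r φ ≤ Real.exp 1 * auxF k₁ k₂ t 0 r φ ∧
    auxF k₁ k₂ t 0 r φ ≤ Real.exp 1 * auxF k₁ k₂ t l r φ := by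
  obtain ⟨b1, b2⟩ := aux_B t r (Real.cos φ) ht hr.1.le hr.2 (Real.neg_one_le_cos φ)
    (Real.cos_le_one φ)
  unfold auxF
  generalize Real.cosh t ^ 2 + 2 * r * Real.cos φ * Real.sinh t * Real.cosh t +
        r ^ 2 * Real.sinh t ^ 2 = B at *
  have hB : 0 < B := lt_of_lt_of_le (by positivity) b1
  have hw1 : 0 ≤ (1 - r ^ 2) ^ (k₁ - 1) := Real.rpow_nonneg (by nlinarith [hr.1, hr.2]) _
  have hw2 : 0 ≤ r ^ (2 * k₂) := Real.rpow_nonneg hr.1.le _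
  have hw3 : 0 ≤ Real.sin φ ^ (2 * k₂ - 1) :=
    Real.rpow_nonneg (Real.sin_nonneg_of_nonneg_of_le_pi hφ.1.le hφ.2) _
  have hlog2 : Real.log B ≤ 2 * t := by
    have := Real.log_le_log hB b2
    rwa [Real.log_pow, Real.log_exp] at this
  have hlog1 : -(2 * t) ≤ Real.log B := by
    have := Real.log_le_log (by positivity) b1
    rw [Real.log_pow, Real.log_exp] at this
    push_cast at this
    linarith
  have c1 : B ^ ((l - (k₁ + 2 * k₂)) / 2) ≤ Real.exp 1 * B ^ ((0 - (k₁ + 2 * k₂)) / 2) := by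
    rw [Real.rpow_def_of_pos hB, Real.rpow_def_of_pos hB, ← Real.exp_add, Real.exp_le_exp]
    nlinarith [mul_le_mul_of_nonneg_left hlog2 hl]
  have c2 : B ^ ((0 - (k₁ + 2 * k₂)) / 2) ≤ Real.exp 1 * B ^ ((l - (k₁ + 2 * k₂)) / 2) := by
    rw [Real.rpow_def_of_pos hB, Real.rpow_def_of_pos hB, ← Real.exp_add, Real.exp_le_exp]
    nlinarith [mul_le_mul_of_nonneg_left hlog1 hl]
  refine ⟨by positivity, by positivity, ?_, ?_⟩
  · simp only [← mul_assoc]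
    gcongr
  · simp only [← mul_assoc]
    gcongr

theorem aux_main (k₁ k₂ t a b : ℝ)
    (h : ∀ r ∈ Set.Ioc (0:ℝ) 1, ∀ φ ∈ Set.Ioc (0:ℝ) Real.pi,
      0 ≤ auxF k₁ k₂ t a r φ ∧ 0 ≤ auxF k₁ k₂ t b r φ ∧
      auxF k₁ k₂ t b r φ ≤ Real.exp 1 * auxF k₁ k₂ t a r φ ∧
      auxF k₁ k₂ t a r φ ≤ Real.exp 1 * auxF k₁ k₂ t b r φ) :
    bcIntegral k₁ k₂ b t ≤ Real.exp 1 * bcIntegral k₁ k₂ a t := by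
  have key : ∀ c, bcIntegral k₁ k₂ c t =
      ∫ r in Set.Ioc (0:ℝ) 1, ∫ φ in Set.Ioc (0:ℝ) Real.pi, auxF k₁ k₂ t c r φ := by
    intro c
    unfold bcIntegral auxF
    rw [intervalIntegral.integral_of_le zero_le_one]
    simp only [intervalIntegral.integral_of_le Real.pi_pos.le]
  have hm : ∀ c r, AEStronglyMeasurable (auxF k₁ k₂ t c r)
      (volume.restrict (Set.Ioc (0:ℝ) Real.pi)) := fun c r =>
    ((auxF_meas k₁ k₂ t c).comp measurable_prodMk_left).aestronglyMeasurable
  rw [key, key]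
  have aeI : ∀ {s : Set ℝ} {p : ℝ → Prop}, MeasurableSet s → (∀ x ∈ s, p x) →
      ∀ᵐ x ∂(volume.restrict s), p x := fun hs hp =>
    (ae_restrict_iff' hs).2 (Filter.Eventually.of_forall hp)
  refine aux_int_le ?_ ?_ ?_ ?_ ?_
  · exact ((auxF_meas k₁ k₂ t a).stronglyMeasurable.integral_prod_right).aestronglyMeasurable
  · exact aeI measurableSet_Ioc fun r hr =>
      integral_nonneg_of_ae (aeI measurableSet_Ioc fun φ hφ => (h r hr φ hφ).2.1)
  · exact aeI measurableSet_Ioc fun r hr =>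
      integral_nonneg_of_ae (aeI measurableSet_Ioc fun φ hφ => (h r hr φ hφ).1)
  · exact aeI measurableSet_Ioc fun r hr => aux_int_le (hm a r)
      (aeI measurableSet_Ioc fun φ hφ => (h r hr φ hφ).2.1)
      (aeI measurableSet_Ioc fun φ hφ => (h r hr φ hφ).1)
      (aeI measurableSet_Ioc fun φ hφ => (h r hr φ hφ).2.2.1)
      (aeI measurableSet_Ioc fun φ hφ => (h r hr φ hφ).2.2.2)
  · exact aeI measurableSet_Ioc fun r hr => aux_int_le (hm b r)
      (aeI measurableSet_Ioc fun φ hφ => (h r hr φ hφ).1)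
      (aeI measurableSet_Ioc fun φ hφ => (h r hr φ hφ).2.1)
      (aeI measurableSet_Ioc fun φ hφ => (h r hr φ hφ).2.2.2)
      (aeI measurableSet_Ioc fun φ hφ => (h r hr φ hφ).2.2.1)

theorem stmt_12 (k₁ k₂ : ℝ) (hk₁ : 0 < k₁) (hk₂ : 0 < k₂) :
    ∀ l t : ℝ, 0 ≤ l → 0 ≤ t → l * t ≤ 1 →
      Real.exp (-1) * bcIntegral k₁ k₂ 0 t ≤ bcIntegral k₁ k₂ l t ∧
        bcIntegral k₁ k₂ l t ≤ Real.exp 1 * bcIntegral k₁ k₂ 0 t := by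
  intro l t hl ht hlt
  have hb := fun r hr φ hφ => auxF_bd k₁ k₂ t l r φ ht hl hlt hr hφ
  refine ⟨?_, aux_main k₁ k₂ t 0 l hb⟩
  have h0 := aux_main k₁ k₂ t l 0 fun r hr φ hφ =>
    ⟨(hb r hr φ hφ).2.1, (hb r hr φ hφ).1, (hb r hr φ hφ).2.2.2, (hb r hr φ hφ).2.2.1⟩
  calc Real.exp (-1) * bcIntegral k₁ k₂ 0 t
      ≤ Real.exp (-1) * (Real.exp 1 * bcIntegral k₁ k₂ l t) := by gcongr
    _ = bcIntegral k₁ k₂ l t := by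
      rw [← mul_assoc, ← Real.exp_add]; simp
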